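/- Let V be an m-dimensional vector space, m = 2k+r, let α_1,…,α_r be 1-forms and β a 2-form on V with α_1∧…∧α_r∧β^k ≠ 0. Then the bivector Λ determined by the data (α_1∧…∧α_r, β) (i.e. the dual bivector of the restriction of β to the kernel of α_1∧…∧α_r, extended by zero) is represented, with respect to the volume form Ω = α_1∧…∧α_r∧β^k, by the (m-2)-form ω = k·α_1∧…∧α_r∧β^{k-1}; that is, α∧β'∧ω = Λ(α,β')·Ω for all 1-forms α,β'. -/

import Mathlib

open AlternatingMap

variable {K V : Type*} [RCLike K] [AddCommGroup V] [Module K V]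

/-- Recasting the degree of an alternating form. -/
noncomputable def acast {a b : ℕ} (h : a = b) (f : V [⋀^Fin a]→ₗ[K] K) : V [⋀^Fin b]→ₗ[K] K :=
  f.domDomCongr (finCongr h)

/-- A linear functional viewed as an alternating 1-form. -/
noncomputable def aw1 (α : Module.Dual K V) : V [⋀^Fin 1]→ₗ[K] K :=
  AlternatingMap.ofSubsingleton K V K 0 α

/-- Wedge product of alternating forms (shuffle-sum/determinant convention). -/
noncomputable def wedgeK {a b : ℕ} (f : V [⋀^Fin a]→ₗ[K] K) (g : V [⋀^Fin b]→ₗ[K] K) :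
    V [⋀^Fin (a + b)]→ₗ[K] K :=
  (TensorProduct.lid K K).toLinearMap.compAlternatingMap
    ((f.domCoprod g).domDomCongr finSumFinEquiv)

/-- `k`-th wedge power of a 2-form. -/
noncomputable def wpow (β : V [⋀^Fin 2]→ₗ[K] K) : (k : ℕ) → V [⋀^Fin (2 * k)]→ₗ[K] K
  | 0 => acast (by omega) (AlternatingMap.constOfIsEmpty K V (Fin 0) 1)
  | (k + 1) => acast (by omega) (wedgeK (wpow β k) β)

/-- Wedge product of a family of 1-forms. -/
noncomputable def wfam : (r : ℕ) → (Fin r → Module.Dual K V) → V [⋀^Fin r]→ₗ[K] K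
  | 0, _ => AlternatingMap.constOfIsEmpty K V (Fin 0) 1
  | (r + 1), α => acast (by omega) (wedgeK (aw1 (α 0)) (wfam r (α ∘ Fin.succ)))

/-!
Write `Ω = α₁ ∧ … ∧ α_r ∧ β ^ (k + 1)` and `x = P δ`. Since `Ω` has top degree, `γ ∧ Ω = 0`, and
contracting this identity with `x` gives `γ ∧ i_x Ω = γ(x) Ω`, where `γ(x) = β(P γ, P δ)`. On the
other hand `i_x αᵢ = 0`, while `i_x β` agrees with `δ` on `⋂ ker αᵢ`, so that `i_x β - δ` lies in
the span of the `αᵢ` and is annihilated by `α₁ ∧ … ∧ α_r`; hence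
`i_x Ω = (k + 1) δ ∧ α₁ ∧ … ∧ α_r ∧ β ^ k`.

The algebra of wedge products and contractions takes place in the ring of functions on finite
sequences under the signed shuffle product, which is defined by the Leibniz rule for contractions.
It computes the wedge product of forms because antisymmetrization turns tensor products into
signed shuffle products; this in turn holds because inserting a vector with signs into all
positions is a graded derivation of the tensor product.
-/

variable {R E M : Type*} [CommRing R] [AddCommGroup M] [Module R M]

/-- Functions on finite sequences of elements of `E`. An alternating `n`-form is encoded by its
values on sequences of length `n`, extended by zero, so that identities between forms of different
nominal degrees need no casts. The ring structure given below is the signed shuffle product, which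
is the wedge product of forms. -/
structure ListForm (R E : Type*) where
  /-- The underlying function. -/
  toFun : List E → R

namespace ListForm

instance : FunLike (ListForm R E) (List E) R where
  coe := toFun
  coe_injective _ _ h := congrArg mk h

omit [CommRing R] in
@[ext] protected lemma ext {F G : ListForm R E} (h : ∀ l, F l = G l) : F = G := DFunLike.ext _ _ h

omit [CommRing R] in
@[simp] lemma mk_apply (f : List E → R) (l : List E) : (⟨f⟩ : ListForm R E) l = f l := rfl

/-- A list form is the same thing as a function; this transports the module structure. -/
def equivFun : ListForm R E ≃ (List E → R) := ⟨toFun, mk, fun _ ↦ rfl, fun _ ↦ rfl⟩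

instance : AddCommGroup (ListForm R E) := equivFun.addCommGroup

instance : Module R (ListForm R E) := equivFun.module R

@[simp] lemma zero_apply (l : List E) : (0 : ListForm R E) l = 0 := rfl

@[simp] lemma add_apply (F G : ListForm R E) (l : List E) : (F + G) l = F l + G l := rfl

@[simp] lemma sub_apply (F G : ListForm R E) (l : List E) : (F - G) l = F l - G l := rfl

@[simp] lemma neg_apply (F : ListForm R E) (l : List E) : (-F) l = -F l := rfl

@[simp] lemma smul_apply (c : R) (F : ListForm R E) (l : List E) : (c • F) l = c * F l := rfl

/-- Evaluation at a sequence. -/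
def eval (l : List E) : ListForm R E →ₗ[R] R where
  toFun F := F l
  map_add' _ _ := rfl
  map_smul' _ _ := rfl

/-- The linear map into list forms with prescribed evaluations. -/
def ofLinear {N : Type*} [AddCommGroup N] [Module R N] (φ : List E → N →ₗ[R] R) :
    N →ₗ[R] ListForm R E where
  toFun n := ⟨fun l ↦ φ l n⟩
  map_add' m n := ListForm.ext fun l ↦ map_add (φ l) m n
  map_smul' c n := ListForm.ext fun l ↦ map_smul (φ l) c n

/-- The bilinear map into list forms with prescribed evaluations. -/
def ofBilinear (φ : List E → ListForm R E →ₗ[R] ListForm R E →ₗ[R] R) :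
    ListForm R E →ₗ[R] ListForm R E →ₗ[R] ListForm R E :=
  LinearMap.mk₂ R (fun F G ↦ ⟨fun l ↦ φ l F G⟩)
    (fun F F' G ↦ ListForm.ext fun l ↦ (φ l).map_add₂ F F' G)
    (fun c F G ↦ ListForm.ext fun l ↦ (φ l).map_smul₂ c F G)
    (fun F G G' ↦ ListForm.ext fun l ↦ map_add (φ l F) G G')
    (fun c F G ↦ ListForm.ext fun l ↦ map_smul (φ l F) c G)

/-- The interior product with `x`: fix `x` as the first entry. -/
def contract (x : E) : ListForm R E →ₗ[R] ListForm R E := ofLinear fun l ↦ eval (x :: l)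

@[simp] lemma contract_apply (x : E) (F : ListForm R E) (l : List E) :
    contract x F l = F (x :: l) := rfl

lemma ext_contract {F G : ListForm R E} (nil : F [] = G [])
    (contract : ∀ x, contract x F = contract x G) : F = G := by
  ext l
  cases l with
  | nil => exact nil
  | cons x l => exact congrArg (· l) (contract x)

/-- The grading involution, which is `(-1) ^ n` on forms of degree `n`. -/
def gradeInvol : ListForm R E →ₗ[R] ListForm R E :=
  ofLinear fun l ↦ (-1 : R) ^ l.length • eval l

@[simp] lemma gradeInvol_apply (F : ListForm R E) (l : List E) :
    gradeInvol F l = (-1) ^ l.length * F l := rfl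

@[simp] lemma gradeInvol_nil (F : ListForm R E) : gradeInvol F [] = F [] := by simp

@[simp] lemma contract_gradeInvol (x : E) (F : ListForm R E) :
    contract x (gradeInvol F) = -gradeInvol (contract x F) := by
  ext l
  simp [pow_succ]

@[simp] lemma gradeInvol_gradeInvol (F : ListForm R E) : gradeInvol (gradeInvol F) = F := by
  ext l
  simp [← mul_assoc, ← mul_pow]

/-! ### The signed shuffle product -/

/-- The value of the signed shuffle product at a sequence. The recursion is the Leibniz rule
`i_x (F ∧ G) = i_x F ∧ G + (-1) ^ deg F • F ∧ i_x G`. -/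
def shuffleAt : List E → ListForm R E →ₗ[R] ListForm R E →ₗ[R] R
  | [] => (LinearMap.mul R R).compl₁₂ (eval []) (eval [])
  | x :: l => (shuffleAt l).compl₁₂ (contract x) .id + (shuffleAt l).compl₁₂ gradeInvol (contract x)

/-- The signed shuffle product as a bilinear map. -/
def shuffle : ListForm R E →ₗ[R] ListForm R E →ₗ[R] ListForm R E := ofBilinear shuffleAt

instance : Mul (ListForm R E) := ⟨fun F G ↦ shuffle F G⟩

instance : One (ListForm R E) := ⟨⟨fun l ↦ if l = [] then 1 else 0⟩⟩

@[simp] lemma one_nil : (1 : ListForm R E) [] = 1 := rfl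

@[simp] lemma contract_one (x : E) : contract x (1 : ListForm R E) = 0 := rfl

@[simp] lemma gradeInvol_one : gradeInvol (1 : ListForm R E) = 1 := by
  exact ext_contract (by simp) (by simp)

@[simp] lemma mul_nil (F G : ListForm R E) : (F * G) [] = F [] * G [] := rfl

lemma mul_cons (F G : ListForm R E) (x : E) (l : List E) :
    (F * G) (x :: l) = (contract x F * G) l + (gradeInvol F * contract x G) l := rfl

instance : NonUnitalNonAssocRing (ListForm R E) where
  left_distrib F G H := map_add (shuffle F) G H
  right_distrib F G H := shuffle.map_add₂ F G H
  zero_mul F := shuffle.map_zero₂ F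
  mul_zero F := LinearMap.map_zero (shuffle F)

lemma contract_mul (x : E) (F G : ListForm R E) :
    contract x (F * G) = contract x F * G + gradeInvol F * contract x G := rfl

lemma gradeInvol_mul (F G : ListForm R E) :
    gradeInvol (F * G) = gradeInvol F * gradeInvol G := by
  ext l
  induction l generalizing F G with
  | nil => simp
  | cons x l ih =>
    rw [← contract_apply, contract_gradeInvol, contract_mul, map_add, neg_apply, add_apply, ih, ih,
      mul_cons, contract_gradeInvol, contract_gradeInvol, neg_mul, mul_neg]
    simp only [neg_apply]
    ring

protected lemma mul_assoc (F G H : ListForm R E) : F * G * H = F * (G * H) := by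
  ext l
  induction l generalizing F G H with
  | nil => simp [_root_.mul_assoc]
  | cons x l ih =>
    simp only [mul_cons, contract_mul, gradeInvol_mul, add_mul, mul_add, add_apply, ih]
    ring

protected lemma one_mul (F : ListForm R E) : 1 * F = F := by
  ext l
  induction l generalizing F with
  | nil => simp
  | cons x l ih => simp [mul_cons, ih]

protected lemma mul_one (F : ListForm R E) : F * 1 = F := by
  ext l
  induction l generalizing F with
  | nil => simp
  | cons x l ih => simp [mul_cons, ih]

instance : Ring (ListForm R E) where
  __ := (inferInstance : NonUnitalNonAssocRing (ListForm R E))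
  mul_assoc := ListForm.mul_assoc
  one_mul := ListForm.one_mul
  mul_one := ListForm.mul_one

instance : Algebra R (ListForm R E) :=
  Algebra.ofModule (fun c F G ↦ shuffle.map_smul₂ c F G) (fun c F G ↦ map_smul (shuffle F) c G)

lemma gradeInvol_pow_of_even {B : ListForm R E} (hB : gradeInvol B = B) (k : ℕ) :
    gradeInvol (B ^ k) = B ^ k := by
  induction k with
  | zero => simp
  | succ k ih => rw [pow_succ, gradeInvol_mul, ih, hB]

/-! ### The concatenation product and antisymmetrization -/

/-- The value of the concatenation product at `l`: the sum of `F l₁ * G l₂` over all splittings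
`l = l₁ ++ l₂`. -/
def concatAt : List E → ListForm R E →ₗ[R] ListForm R E →ₗ[R] R
  | [] => (LinearMap.mul R R).compl₁₂ (eval []) (eval [])
  | x :: l => (LinearMap.mul R R).compl₁₂ (eval []) (eval (x :: l)) +
      (concatAt l).compl₁₂ (contract x) .id

/-- The concatenation product as a bilinear map. On multilinear forms it is the tensor product. -/
def concat : ListForm R E →ₗ[R] ListForm R E →ₗ[R] ListForm R E := ofBilinear concatAt

@[simp] lemma concat_nil (F G : ListForm R E) : concat F G [] = F [] * G [] := rfl

lemma contract_concat (x : E) (F G : ListForm R E) :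
    contract x (concat F G) = F [] • contract x G + concat (contract x F) G := rfl

lemma concat_cons (F G : ListForm R E) (x : E) (l : List E) :
    concat F G (x :: l) = F [] * G (x :: l) + concat (contract x F) G l := rfl

lemma concat_apply_of_support {a : ℕ} {F : ListForm R E} (hF : ∀ l, l.length ≠ a → F l = 0)
    (G : ListForm R E) (l : List E) : concat F G l = F (l.take a) * G (l.drop a) := by
  induction l generalizing F a with
  | nil => simp
  | cons x l ih =>
    rw [concat_cons]
    cases a with
    | zero =>
      have hx : contract x F = 0 := ListForm.ext fun t ↦ hF _ (by simp)
      simp [hx]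
    | succ a =>
      have hx : ∀ t, t.length ≠ a → contract x F t = 0 := fun t ht ↦ hF _ (by simpa using ht)
      simp [ih hx, hF []]

/-- The alternating sum over all ways of inserting `x` into a sequence `l`, where inserting after
`p` entries carries the sign `(-1) ^ p`. -/
def insertAt (x : E) : List E → ListForm R E →ₗ[R] R
  | [] => eval [x]
  | y :: l => eval (x :: y :: l) - insertAt x l ∘ₗ contract y

/-- The signed insertion of `x`, a graded derivation of the concatenation product. -/
def signedInsert (x : E) : ListForm R E →ₗ[R] ListForm R E := ofLinear (insertAt x)

@[simp] lemma signedInsert_nil (x : E) (F : ListForm R E) : signedInsert x F [] = F [x] := rfl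

lemma contract_signedInsert (x y : E) (F : ListForm R E) :
    contract y (signedInsert x F) = contract y (contract x F) - signedInsert x (contract y F) :=
  rfl

lemma signedInsert_cons (x y : E) (F : ListForm R E) (l : List E) :
    signedInsert x F (y :: l) = F (x :: y :: l) - signedInsert x (contract y F) l := rfl

lemma signedInsert_gradeInvol (x : E) (F : ListForm R E) :
    signedInsert x (gradeInvol F) = -gradeInvol (signedInsert x F) := by
  ext l
  induction l generalizing F with
  | nil => simp
  | cons y l ih =>
    rw [signedInsert_cons, contract_gradeInvol, map_neg, neg_apply, ih]
    simp only [neg_apply, gradeInvol_apply, signedInsert_cons, List.length_cons]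
    ring

theorem signedInsert_concat (x : E) (F G : ListForm R E) :
    signedInsert x (concat F G) =
      concat (signedInsert x F) G + concat (gradeInvol F) (signedInsert x G) := by
  ext l
  induction l generalizing F G with
  | nil => simp [concat_cons, add_comm]
  | cons y l ih =>
    rw [signedInsert_cons, contract_concat, map_add, map_smul, add_apply, ih]
    simp only [add_apply, smul_apply, concat_cons, contract_signedInsert, contract_gradeInvol,
      signedInsert_cons, signedInsert_nil, gradeInvol_nil, map_sub, map_neg, LinearMap.sub_apply,
      LinearMap.neg_apply, sub_apply, neg_apply, contract_apply]
    ring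

lemma signedInsert_ofFn (x : E) {n : ℕ} (F : ListForm R E) (v : Fin n → E) :
    signedInsert x F (List.ofFn v) =
      ∑ p : Fin (n + 1), (-1) ^ (p : ℕ) * F (List.ofFn (p.insertNth (α := fun _ ↦ E) x v)) := by
  induction n generalizing F with
  | zero => simp
  | succ n ih =>
    obtain ⟨y, u, rfl⟩ : ∃ y u, v = Fin.cons y u := ⟨_, _, (Fin.cons_self_tail v).symm⟩
    rw [List.ofFn_cons, signedInsert_cons, ih, Fin.sum_univ_succ (n := n + 1), sub_eq_add_neg,
      ← Finset.sum_neg_distrib]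
    simp only [Fin.insertNth_succ_cons, Fin.insertNth_zero', List.ofFn_cons, Fin.val_succ,
      pow_succ, contract_apply, Fin.val_zero, pow_zero, one_mul, mul_neg_one, neg_mul]

/-- The value of `antisymm` at a sequence, obtained by inserting the entries one after another. -/
def antisymmAt : List E → ListForm R E →ₗ[R] R
  | [] => eval []
  | x :: l => antisymmAt l ∘ₗ signedInsert x

/-- Antisymmetrization: the signed sum over all reorderings of the sequence, without a
normalizing factor. -/
def antisymm : ListForm R E →ₗ[R] ListForm R E := ofLinear antisymmAt

@[simp] lemma antisymm_nil (F : ListForm R E) : antisymm F [] = F [] := rfl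

@[simp] lemma antisymm_cons (F : ListForm R E) (x : E) (l : List E) :
    antisymm F (x :: l) = antisymm (signedInsert x F) l := rfl

lemma contract_antisymm (x : E) (F : ListForm R E) :
    contract x (antisymm F) = antisymm (signedInsert x F) := rfl

lemma antisymm_gradeInvol (F : ListForm R E) :
    antisymm (gradeInvol F) = gradeInvol (antisymm F) := by
  ext l
  induction l generalizing F with
  | nil => simp
  | cons x l ih =>
    rw [antisymm_cons, signedInsert_gradeInvol, map_neg, neg_apply, ih]
    simp [pow_succ]

theorem antisymm_concat (F G : ListForm R E) :
    antisymm (concat F G) = antisymm F * antisymm G := by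
  ext l
  induction l generalizing F G with
  | nil => simp
  | cons x l ih =>
    rw [antisymm_cons, signedInsert_concat, map_add, add_apply, ih, ih, mul_cons,
      contract_antisymm, contract_antisymm, antisymm_gradeInvol]

section Perm

variable {A : Type*} [AddCommGroup A] {n : ℕ}

/-- The index sent to `0` is `q.1`, and `q.2` is the permutation induced on the others. -/
lemma bijective_decomposeFin_symm_mul_cycleRange : Function.Bijective
    fun q : Fin (n + 1) × Equiv.Perm (Fin n) ↦
      Equiv.Perm.decomposeFin.symm (0, q.2) * q.1.cycleRange := by
  refine (Fintype.bijective_iff_injective_and_card _).2 ⟨?_, ?_⟩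
  · rintro ⟨p, e⟩ ⟨p', e'⟩ h
    dsimp only at h
    obtain rfl : p = p' := by
      apply (Equiv.Perm.decomposeFin.symm (0, e) * p.cycleRange).injective
      trans 0
      · simp
      · rw [h]; simp
    simpa using h
  · simp [Fintype.card_perm, Nat.factorial_succ]

lemma cons_comp_decomposeFin_symm (x : E) (v : Fin n → E) (e : Equiv.Perm (Fin n)) :
    (Fin.cons x v : Fin (n + 1) → E) ∘ Equiv.Perm.decomposeFin.symm (0, e) =
      Fin.cons x (v ∘ e) := by
  ext i
  cases i using Fin.cases <;> simp

lemma sum_perm_sign_smul_cons_comp (H : (Fin (n + 1) → E) → A) (x : E) (v : Fin n → E) :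
    ∑ σ : Equiv.Perm (Fin (n + 1)), Equiv.Perm.sign σ • H ((Fin.cons x v : Fin (n + 1) → E) ∘ σ) =
      ∑ e : Equiv.Perm (Fin n), Equiv.Perm.sign e •
        ∑ p : Fin (n + 1), (-1 : ℤˣ) ^ (p : ℕ) • H (p.insertNth (α := fun _ ↦ E) x (v ∘ e)) := by
  simp_rw [Finset.smul_sum]
  rw [Finset.sum_comm, ← Fintype.sum_prod_type']
  refine (Fintype.sum_bijective _ bijective_decomposeFin_symm_mul_cycleRange _ _ ?_).symm
  rintro ⟨p, e⟩
  rw [Equiv.Perm.coe_mul, ← Function.comp_assoc, cons_comp_decomposeFin_symm,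
    Fin.cons_comp_cycleRange, smul_smul]
  simp

lemma antisymm_ofFn (F : ListForm R E) (v : Fin n → E) :
    antisymm F (List.ofFn v) =
      ∑ σ : Equiv.Perm (Fin n), Equiv.Perm.sign σ • F (List.ofFn (v ∘ σ)) := by
  induction n generalizing F with
  | zero => simp
  | succ n ih =>
    obtain ⟨x, u, rfl⟩ : ∃ x u, v = Fin.cons x u := ⟨_, _, (Fin.cons_self_tail v).symm⟩
    rw [List.ofFn_cons, antisymm_cons, ih, sum_perm_sign_smul_cons_comp fun w ↦ F (List.ofFn w)]
    simp only [signedInsert_ofFn, Units.smul_def, Units.val_pow_eq_pow_val, Units.val_neg,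
      Units.val_one, zsmul_eq_mul, Int.cast_pow, Int.cast_neg, Int.cast_one]

end Perm

/-! ### Products of linear functionals -/

section OneForm

/-- A linear functional as a list form. -/
def oneForm : Module.Dual R M →ₗ[R] ListForm R M :=
  ofLinear fun
    | [x] => LinearMap.applyₗ x
    | _ => 0

@[simp] lemma oneForm_nil (δ : Module.Dual R M) : oneForm δ [] = 0 := rfl

@[simp] lemma oneForm_singleton (δ : Module.Dual R M) (x : M) : oneForm δ [x] = δ x := rfl

@[simp] lemma contract_oneForm (x : M) (δ : Module.Dual R M) : contract x (oneForm δ) = δ x • 1 :=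
  ext_contract (by simp) fun y ↦ by rw [map_smul, contract_one, smul_zero]; rfl

@[simp] lemma gradeInvol_oneForm (δ : Module.Dual R M) : gradeInvol (oneForm δ) = -oneForm δ :=
  ext_contract (by simp) (by simp)

lemma mul_oneForm (F : ListForm R M) (δ : Module.Dual R M) :
    F * oneForm δ = oneForm δ * gradeInvol F := by
  ext l
  induction l generalizing F with
  | nil => simp
  | cons x l ih =>
    simp [mul_cons, ih, add_comm]

lemma oneForm_mul_oneForm_self (δ : Module.Dual R M) : oneForm δ * oneForm δ = 0 :=
  ext_contract (by simp) fun x ↦ by simp [contract_mul]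

lemma oneForm_mul_oneForm_comm (γ δ : Module.Dual R M) :
    oneForm γ * oneForm δ = -(oneForm δ * oneForm γ) := by
  rw [mul_oneForm, gradeInvol_oneForm, mul_neg]

lemma oneForm_mul_prod_of_mem {L : List (Module.Dual R M)} {γ : Module.Dual R M} (hγ : γ ∈ L) :
    oneForm γ * (L.map oneForm).prod = 0 := by
  induction L with
  | nil => simp at hγ
  | cons α L ih =>
    rw [List.map_cons, List.prod_cons, ← mul_assoc]
    rcases List.mem_cons.1 hγ with rfl | hγ
    · rw [oneForm_mul_oneForm_self, zero_mul]
    · rw [oneForm_mul_oneForm_comm, neg_mul, mul_assoc, ih hγ, mul_zero, neg_zero]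

lemma oneForm_mul_prod_of_mem_span {L : List (Module.Dual R M)} {γ : Module.Dual R M}
    (hγ : γ ∈ Submodule.span R {α | α ∈ L}) : oneForm γ * (L.map oneForm).prod = 0 := by
  have hle : Submodule.span R {α | α ∈ L} ≤
      LinearMap.ker (LinearMap.mulRight R (L.map oneForm).prod ∘ₗ oneForm) :=
    Submodule.span_le.2 fun _ ↦ oneForm_mul_prod_of_mem
  exact hle hγ

lemma contract_prod_oneForm {L : List (Module.Dual R M)} {x : M} (hx : ∀ α ∈ L, α x = 0) :
    contract x (L.map oneForm).prod = 0 := by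
  induction L with
  | nil => simp
  | cons α L ih => simp_all [contract_mul]

lemma contract_pow_succ {B : ListForm R M} {x : M} {b : Module.Dual R M}
    (hB : gradeInvol B = B) (hb : contract x B = oneForm b) (k : ℕ) :
    contract x (B ^ (k + 1)) = (k + 1 : R) • (oneForm b * B ^ k) := by
  induction k with
  | zero => simp [hb]
  | succ k ih =>
    rw [pow_succ, contract_mul, ih, gradeInvol_pow_of_even hB, hb, mul_oneForm,
      gradeInvol_pow_of_even hB, smul_mul_assoc, mul_assoc, ← pow_succ]
    push_cast
    module

theorem contract_mul_pow_succ {A B : ListForm R M} {x : M} {b δ : Module.Dual R M}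
    (hA : contract x A = 0) (hbδ : oneForm (b - δ) * A = 0)
    (hB : gradeInvol B = B) (hb : contract x B = oneForm b) (k : ℕ) :
    contract x (A * B ^ (k + 1)) = (k + 1 : R) • (oneForm δ * (A * B ^ k)) := by
  have hbA : oneForm b * A = oneForm δ * A := by
    rwa [map_sub, sub_mul, sub_eq_zero] at hbδ
  rw [contract_mul, hA, zero_mul, zero_add, contract_pow_succ hB hb, mul_smul_comm, ← mul_assoc,
    mul_oneForm, gradeInvol_gradeInvol, hbA, mul_assoc]

theorem oneForm_mul_contract {Ω : ListForm R M} {γ : Module.Dual R M} (hγ : oneForm γ * Ω = 0)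
    (x : M) : oneForm γ * contract x Ω = γ x • Ω := by
  have h := congrArg (contract x) hγ
  rwa [contract_mul, contract_oneForm, gradeInvol_oneForm, _root_.map_zero, smul_mul_assoc,
    one_mul, neg_mul, add_neg_eq_zero, eq_comm] at h

end OneForm

/-! ### Alternating forms as list forms -/

section AlternatingMap

variable {n : ℕ}

omit [CommRing R] in
lemma ext_ofFn {F G : ListForm R E}
    (h : ∀ (n : ℕ) (v : Fin n → E), F (List.ofFn v) = G (List.ofFn v)) : F = G :=
  ListForm.ext <| List.forall_iff_forall_tuple.2 h

/-- An alternating form as a list form: its values in its own degree, and zero in all others. -/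
def ofAlternatingMap : (M [⋀^Fin n]→ₗ[R] R) →ₗ[R] ListForm R M where
  toFun f := ⟨fun l ↦ if h : l.length = n then f fun i ↦ l.get (i.cast h.symm) else 0⟩
  map_add' f g := by
    ext l
    by_cases h : l.length = n <;> simp [h]
  map_smul' c f := by
    ext l
    by_cases h : l.length = n <;> simp [h]

lemma ofAlternatingMap_apply_of_length_ne (f : M [⋀^Fin n]→ₗ[R] R) {l : List M}
    (h : l.length ≠ n) : ofAlternatingMap f l = 0 := dif_neg h

@[simp] lemma ofAlternatingMap_ofFn (f : M [⋀^Fin n]→ₗ[R] R) (v : Fin n → M) :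
    ofAlternatingMap f (List.ofFn v) = f v := by
  refine (dif_pos (List.length_ofFn (f := v))).trans (congrArg f ?_)
  ext i
  simp

lemma ofAlternatingMap_injective :
    Function.Injective (ofAlternatingMap : (M [⋀^Fin n]→ₗ[R] R) →ₗ[R] ListForm R M) := by
  intro f g h
  ext v
  simpa using congrArg (· (List.ofFn v)) h

lemma gradeInvol_ofAlternatingMap (f : M [⋀^Fin n]→ₗ[R] R) :
    gradeInvol (ofAlternatingMap f) = (-1 : R) ^ n • ofAlternatingMap f := by
  ext l
  by_cases h : l.length = n
  · simp [h]
  · simp [ofAlternatingMap_apply_of_length_ne f h]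

lemma contract_ofAlternatingMap (x : M) (f : M [⋀^Fin (n + 1)]→ₗ[R] R) :
    contract x (ofAlternatingMap f) = ofAlternatingMap (f.curryLeft x) := by
  refine ext_ofFn fun m v ↦ ?_
  rcases eq_or_ne m n with rfl | hm
  · rw [contract_apply, ← List.ofFn_cons, ofAlternatingMap_ofFn, ofAlternatingMap_ofFn]
    rfl
  · rw [contract_apply, ofAlternatingMap_apply_of_length_ne, ofAlternatingMap_apply_of_length_ne]
      <;> simpa

lemma antisymm_ofAlternatingMap (f : M [⋀^Fin n]→ₗ[R] R) :
    antisymm (ofAlternatingMap f) = (n.factorial : R) • ofAlternatingMap f := by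
  refine ext_ofFn fun m v ↦ ?_
  rcases eq_or_ne m n with rfl | hm
  · simp [antisymm_ofFn, AlternatingMap.map_perm, smul_smul, Fintype.card_perm]
  · simp [antisymm_ofFn, ofAlternatingMap_apply_of_length_ne f, hm]

lemma ofAlternatingMap_ofSubsingleton (δ : Module.Dual R M) :
    ofAlternatingMap (ofSubsingleton R M R (0 : Fin 1) δ) = oneForm δ := by
  refine ext_ofFn fun m v ↦ ?_
  match m, v with
  | 0, v => simp [ofAlternatingMap_apply_of_length_ne]
  | 1, v =>
    rw [ofAlternatingMap_ofFn]
    simp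
  | m + 2, v =>
    rw [ofAlternatingMap_apply_of_length_ne _ (by simp), List.ofFn_succ, List.ofFn_succ]
    rfl

lemma ofAlternatingMap_constOfIsEmpty :
    ofAlternatingMap (constOfIsEmpty R M (Fin 0) (1 : R)) = 1 := by
  refine ext_contract rfl fun x ↦ ListForm.ext fun l ↦ ?_
  rw [contract_apply, ofAlternatingMap_apply_of_length_ne _ (by simp), contract_one, zero_apply]

/-- The interior product `f(x, ·)` of an alternating 2-form with `x`, as a linear functional. -/
def interiorTwo (f : M [⋀^Fin 2]→ₗ[R] R) (x : M) : Module.Dual R M :=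
  (ofSubsingleton R M R (0 : Fin 1)).symm (f.curryLeft x)

lemma interiorTwo_apply (f : M [⋀^Fin 2]→ₗ[R] R) (x y : M) : interiorTwo f x y = f ![x, y] := by
  refine congrArg f ?_
  ext i
  fin_cases i <;> rfl

lemma contract_ofAlternatingMap_two (x : M) (f : M [⋀^Fin 2]→ₗ[R] R) :
    contract x (ofAlternatingMap f) = oneForm (interiorTwo f x) := by
  rw [contract_ofAlternatingMap, ← ofAlternatingMap_ofSubsingleton, interiorTwo,
    Equiv.apply_symm_apply]

lemma concat_ofAlternatingMap_apply_of_length_ne {a b : ℕ} (f : M [⋀^Fin a]→ₗ[R] R)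
    (g : M [⋀^Fin b]→ₗ[R] R) {l : List M} (h : l.length ≠ a + b) :
    concat (ofAlternatingMap f) (ofAlternatingMap g) l = 0 := by
  rw [concat_apply_of_support fun _ ↦ ofAlternatingMap_apply_of_length_ne f]
  by_cases ha : (l.take a).length = a
  · rw [ofAlternatingMap_apply_of_length_ne g, mul_zero]
    grind
  · rw [ofAlternatingMap_apply_of_length_ne f ha, zero_mul]

lemma concat_ofAlternatingMap_ofFn {a b : ℕ} (f : M [⋀^Fin a]→ₗ[R] R) (g : M [⋀^Fin b]→ₗ[R] R)
    (v : Fin (a + b) → M) :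
    concat (ofAlternatingMap f) (ofAlternatingMap g) (List.ofFn v) =
      f (v ∘ Fin.castAdd b) * g (v ∘ Fin.natAdd a) := by
  rw [concat_apply_of_support fun _ ↦ ofAlternatingMap_apply_of_length_ne f]
  have hsplit : List.ofFn v =
      List.ofFn (v ∘ Fin.castAdd b) ++ List.ofFn (v ∘ Fin.natAdd a) := by
    rw [← List.ofFn_fin_append]
    exact congrArg List.ofFn Fin.append_castAdd_natAdd.symm
  rw [hsplit, List.take_left' (by simp), List.drop_left' (by simp), ofAlternatingMap_ofFn,
    ofAlternatingMap_ofFn]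

end AlternatingMap

lemma ofAlternatingMap_acast {a b : ℕ} (h : a = b) (f : V [⋀^Fin a]→ₗ[K] K) :
    ofAlternatingMap (acast h f) = ofAlternatingMap f := by
  subst h
  rfl

lemma factorial_mul_wedgeK_apply {a b : ℕ} (f : V [⋀^Fin a]→ₗ[K] K) (g : V [⋀^Fin b]→ₗ[K] K)
    (v : Fin (a + b) → V) :
    ((a.factorial * b.factorial : ℕ) : K) * wedgeK f g v =
      ∑ σ : Equiv.Perm (Fin (a + b)), Equiv.Perm.sign σ •
        (f (v ∘ σ ∘ Fin.castAdd b) * g (v ∘ σ ∘ Fin.natAdd a)) := by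
  have h := congrArg (fun F ↦ TensorProduct.lid K K (F (v ∘ finSumFinEquiv)))
    (MultilinearMap.domCoprod_alternization_eq f g)
  rw [AlternatingMap.smul_apply, map_nsmul, nsmul_eq_mul, Fintype.card_fin, Fintype.card_fin] at h
  refine h.symm.trans ?_
  rw [MultilinearMap.alternatization_apply, map_sum]
  refine Fintype.sum_equiv finSumFinEquiv.permCongr _ _ fun σ ↦ ?_
  rw [Units.smul_def, map_zsmul, Equiv.Perm.sign_permCongr, Units.smul_def]
  simp [Function.comp_def, MultilinearMap.domCoprod_apply, Equiv.permCongr_apply]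

lemma factorial_smul_ofAlternatingMap_wedgeK {a b : ℕ} (f : V [⋀^Fin a]→ₗ[K] K)
    (g : V [⋀^Fin b]→ₗ[K] K) :
    ((a.factorial * b.factorial : ℕ) : K) • ofAlternatingMap (wedgeK f g) =
      antisymm (concat (ofAlternatingMap f) (ofAlternatingMap g)) := by
  refine ext_ofFn fun n v ↦ ?_
  rw [antisymm_ofFn, smul_apply]
  rcases eq_or_ne n (a + b) with rfl | hn
  · rw [ofAlternatingMap_ofFn, factorial_mul_wedgeK_apply]
    simp only [concat_ofAlternatingMap_ofFn, Function.comp_assoc]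
  · simp [ofAlternatingMap_apply_of_length_ne, concat_ofAlternatingMap_apply_of_length_ne, hn]

theorem ofAlternatingMap_wedgeK {a b : ℕ} (f : V [⋀^Fin a]→ₗ[K] K) (g : V [⋀^Fin b]→ₗ[K] K) :
    ofAlternatingMap (wedgeK f g) = ofAlternatingMap f * ofAlternatingMap g := by
  have hfact : ((a.factorial * b.factorial : ℕ) : K) ≠ 0 := by
    exact_mod_cast (Nat.mul_pos a.factorial_pos b.factorial_pos).ne'
  refine smul_right_injective _ hfact ?_
  dsimp only
  rw [factorial_smul_ofAlternatingMap_wedgeK, antisymm_concat, antisymm_ofAlternatingMap,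
    antisymm_ofAlternatingMap, smul_mul_smul_comm, Nat.cast_mul]

lemma ofAlternatingMap_wpow (β : V [⋀^Fin 2]→ₗ[K] K) (k : ℕ) :
    ofAlternatingMap (wpow β k) = ofAlternatingMap β ^ k := by
  induction k with
  | zero => rw [wpow, ofAlternatingMap_acast, ofAlternatingMap_constOfIsEmpty, pow_zero]
  | succ k ih => rw [wpow, ofAlternatingMap_acast, ofAlternatingMap_wedgeK, ih, pow_succ]

lemma ofAlternatingMap_wfam {r : ℕ} (α : Fin r → Module.Dual K V) :
    ofAlternatingMap (wfam r α) = ((List.ofFn α).map oneForm).prod := by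
  induction r with
  | zero => exact ofAlternatingMap_constOfIsEmpty
  | succ r ih =>
    rw [wfam, ofAlternatingMap_acast, ofAlternatingMap_wedgeK, ih, aw1,
      ofAlternatingMap_ofSubsingleton, List.ofFn_succ, List.map_cons, List.prod_cons]
    rfl

end ListForm

open ListForm

lemma alternatingMap_eq_zero_of_finrank_lt [Module.Finite R M] [IsDomain R]
    {N ι : Type*} [AddCommGroup N] [Module R N] [Module.IsTorsionFree R N] [Fintype ι]
    (h : Module.finrank R M < Fintype.card ι) (f : M [⋀^ι]→ₗ[R] N) : f = 0 :=
  AlternatingMap.ext fun v ↦ f.map_linearDependent v fun hv ↦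
    hv.fintype_card_le_finrank.not_gt h

/-- Lemma 2: with `m = 2k + r` (here `k ≥ 1` written as `k+1`),
1-forms `α₁,…,α_r` and a 2-form `β` with `α₁∧…∧α_r∧β^k ≠ 0`, the bivector determined
by the data `(α₁∧…∧α_r, β)` — i.e. the dual bivector `Λ(γ,δ) = β(Pγ, Pδ)` of the
restriction of `β` to `W = ⋂ Ker αᵢ`, where `Pγ ∈ W` and `β(Pγ, ·)|_W = γ|_W` —
is represented by `(k·α₁∧…∧α_r∧β^{k-1}, α₁∧…∧α_r∧β^k)`. -/
theorem stmt_2 [FiniteDimensional K V] (r k : ℕ)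
    (hdim : Module.finrank K V = 2 * (k + 1) + r)
    (α : Fin r → Module.Dual K V) (β : V [⋀^Fin 2]→ₗ[K] K)
    (hne : wedgeK (wfam r α) (wpow β (k + 1)) ≠ 0)
    (P : Module.Dual K V →ₗ[K] V)
    (hP1 : ∀ γ : Module.Dual K V, P γ ∈ ⨅ i : Fin r, LinearMap.ker (α i))
    (hP2 : ∀ γ : Module.Dual K V, ∀ w ∈ ⨅ i : Fin r, LinearMap.ker (α i),
      β ![P γ, w] = γ w) :
    ∀ γ δ : Module.Dual K V,
      acast (by omega)
          (wedgeK (aw1 γ) (wedgeK (aw1 δ)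
            (((k : K) + 1) • wedgeK (wfam r α) (wpow β k))))
        = β ![P γ, P δ] • wedgeK (wfam r α) (wpow β (k + 1)) := by
  intro γ δ
  have hdeg : wedgeK (aw1 γ) (wedgeK (wfam r α) (wpow β (k + 1))) = 0 :=
    alternatingMap_eq_zero_of_finrank_lt (by rw [hdim, Fintype.card_fin]; omega) _
  have hΩ : oneForm γ * ofAlternatingMap (wedgeK (wfam r α) (wpow β (k + 1))) = 0 := by
    rw [← ofAlternatingMap_ofSubsingleton, ← aw1, ← ofAlternatingMap_wedgeK, hdeg, _root_.map_zero]
  have hspan : interiorTwo β (P δ) - δ ∈ Submodule.span K {γ | γ ∈ List.ofFn α} := by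
    simp only [List.mem_ofFn]
    refine mem_span_of_iInf_ker_le_ker fun w hw ↦ ?_
    rw [LinearMap.mem_ker, LinearMap.sub_apply, sub_eq_zero, interiorTwo_apply, hP2 δ w hw]
  have hker : ∀ γ ∈ List.ofFn α, γ (P δ) = 0 := by
    simpa using hP1 δ
  have hβ : gradeInvol (ofAlternatingMap β) = ofAlternatingMap β := by
    simp [gradeInvol_ofAlternatingMap]
  refine ofAlternatingMap_injective ?_
  rw [hP2 γ _ (hP1 δ), map_smul, ← oneForm_mul_contract hΩ]
  simp only [ofAlternatingMap_acast, ofAlternatingMap_wedgeK, map_smul, ofAlternatingMap_wpow,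
    ofAlternatingMap_wfam, aw1, ofAlternatingMap_ofSubsingleton]
  rw [contract_mul_pow_succ (contract_prod_oneForm hker) (oneForm_mul_prod_of_mem_span hspan) hβ
    (contract_ofAlternatingMap_two _ β), mul_smul_comm]
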